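/- Consider a closed Hilbert complex segment: real Hilbert spaces W0, W1, W2 with closed, densely defined linear operators d0 : V0 → W1 (dense domain V0 ⊆ W0) and d1 : V1 → W2 (dense domain V1 ⊆ W1) such that d0(V0) ⊆ V1, d1(d0 τ) = 0 for all τ ∈ V0, and the ranges B = d0(V0) ⊆ W1 and d1(V1) ⊆ W2 are closed. Let d0† be the adjoint of d0, with domain V1* ⊆ W1 and values in W0, let X = V1 ∩ V1* with the intersection inner product ⟨u, v⟩_X = ⟨u, v⟩ + ⟨d1 u, d1 v⟩ + ⟨d0† u, d0† v⟩, let H = {w ∈ V1 : d1 w = 0 and ⟨w, d0 τ⟩ = 0 for all τ ∈ V0} be the harmonic space, and let P_H denote the W1-orthogonal projection onto H. Then for every f ∈ W1 there exists a unique u ∈ X satisfying ⟨d0† u, d0† v⟩ + ⟨d1 u, d1 v⟩ + ⟨P_H u, P_H v⟩ = ⟨f, v⟩ for all v ∈ X, and there is a constant C (independent of f) such that ‖u‖_X ≤ C ‖f‖. -/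

import Mathlib

/-!
The energy form `a(u, v) = ⟪d0† u, d0† v⟫ + ⟪d1 u, d1 v⟫ + ⟪P_H u, P_H v⟫` is bounded on the Hilbert
space `X`, and `f` defines the bounded functional `v ↦ ⟪f, v⟫` on `X`, so by Lax-Milgram everything
reduces to the abstract Poincaré inequality `‖u‖² ≤ K² a(u, u)` (`poincare_inequality`).

To prove it, the open mapping theorem on the graph of an operator with closed range supplies
preimages of controlled norm (`exists_bounded_preimage`).  Applied to `d1` it gives `z ∈ V1` with
`d1 z = d1 u` and `‖z‖ ≤ C₁ ‖d1 u‖`; then `u - z` lies in `ker d1`, which splits orthogonally as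
`B ⊕ H`, so that `u = z + d0 τ + h`, and the lemma applied to `d0` allows `‖τ‖ ≤ C₀ ‖d0 τ‖`.
Consequently `‖u‖² = ⟪u, z⟫ + ⟪d0† u, τ⟫ + ⟪P_H u, h⟫`, and each term is controlled by the energy.

The space `X` is realised as its graph `{(u, d0† u, d1 u)}` in the Hilbert product
`W1 × W0 × W2` (`graphX`), whose inner product is exactly `⟪·, ·⟫_X`.  The graph is closed since
`d1` is closed and an adjoint is always closed (`isClosed_graph_adjoint`), so it is a Hilbert space.
-/

open scoped RealInnerProductSpace

section

variable {W0 W1 W2 : Type*}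
  [NormedAddCommGroup W0] [InnerProductSpace ℝ W0] [CompleteSpace W0]
  [NormedAddCommGroup W1] [InnerProductSpace ℝ W1] [CompleteSpace W1]
  [NormedAddCommGroup W2] [InnerProductSpace ℝ W2] [CompleteSpace W2]

/-- `u` solves the variational problem
`⟪d0† u, d0† v⟫ + ⟪d1 u, d1 v⟫ + ⟪P_H u, P_H v⟫ = ⟪f, v⟫` for all `v ∈ V1 ∩ V1*`. -/
def IsVariationalSolution (V1 : Submodule ℝ W1) (V1s : Submodule ℝ W1)
    (d1 : V1 →ₗ[ℝ] W2) (δ : V1s →ₗ[ℝ] W0) (PH : W1 → W1) (f u : W1) : Prop :=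
  ∃ (hu1 : u ∈ V1) (hu2 : u ∈ V1s),
    ∀ (v : W1) (hv1 : v ∈ V1) (hv2 : v ∈ V1s),
      ⟪δ ⟨u, hu2⟩, δ ⟨v, hv2⟩⟫ + ⟪d1 ⟨u, hu1⟩, d1 ⟨v, hv1⟩⟫ + ⟪PH u, PH v⟫ = ⟪f, v⟫

/-- A closed operator with closed range has preimages of controlled norm: this is the open mapping
theorem for the projection of its graph onto its range. -/
lemma exists_bounded_preimage {E F : Type*}
    [NormedAddCommGroup E] [InnerProductSpace ℝ E] [CompleteSpace E]
    [NormedAddCommGroup F] [InnerProductSpace ℝ F] [CompleteSpace F]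
    (V : Submodule ℝ E) (T : V →ₗ[ℝ] F)
    (hg : IsClosed {p : E × F | ∃ v : V, (v : E) = p.1 ∧ T v = p.2})
    (hr : IsClosed (Set.range (⇑T))) :
    ∃ C > 0, ∀ v : V, ∃ v' : V, T v' = T v ∧ ‖(v' : E)‖ ≤ C * ‖T v‖ := by
  let G : Submodule ℝ (E × F) := LinearMap.range (V.subtype.prod T)
  have hG : IsClosed (G : Set (E × F)) := by
    convert hg using 1
    ext p
    simp [G, Prod.ext_iff]
  have hR : IsClosed ((LinearMap.range T : Submodule ℝ F) : Set F) := by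
    rwa [LinearMap.coe_range]
  have : CompleteSpace G := hG.completeSpace_coe
  have : CompleteSpace (LinearMap.range T) := hR.completeSpace_coe
  let Φ : G →L[ℝ] LinearMap.range T :=
    ((ContinuousLinearMap.snd ℝ E F).comp G.subtypeL).codRestrict (LinearMap.range T) (by
      rintro ⟨p, v, rfl⟩
      exact ⟨v, rfl⟩)
  have hΦ : Function.Surjective Φ := by
    rintro ⟨_, v, rfl⟩
    exact ⟨⟨_, v, rfl⟩, rfl⟩
  obtain ⟨C, hC, h⟩ := Φ.exists_preimage_norm_le hΦ
  refine ⟨C, hC, fun v => ?_⟩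
  obtain ⟨⟨_, v', rfl⟩, h1, h2⟩ := h ⟨T v, v, rfl⟩
  refine ⟨v', congrArg Subtype.val h1, ?_⟩
  exact (norm_fst_le (V.subtype.prod T v')).trans h2

omit [CompleteSpace W0] [CompleteSpace W1] in
/-- The graph of the adjoint `d0†` is closed, being cut out by the equations
`⟪a, τ⟫ = ⟪w, d0 τ⟫`; density of `V0` makes `a` unique. -/
lemma isClosed_graph_adjoint (V0 : Submodule ℝ W0) (d0 : V0 →ₗ[ℝ] W1)
    (hV0dense : Dense (V0 : Set W0)) (V1s : Submodule ℝ W1)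
    (hV1s : ∀ w : W1, w ∈ V1s ↔ ∃ Cw : ℝ, ∀ τ : V0, |⟪w, d0 τ⟫| ≤ Cw * ‖(τ : W0)‖)
    (δ : V1s →ₗ[ℝ] W0)
    (hδ : ∀ (w : V1s) (τ : V0), ⟪δ w, (τ : W0)⟫ = ⟪(w : W1), d0 τ⟫) :
    IsClosed {p : W1 × W0 | ∃ w : V1s, (w : W1) = p.1 ∧ δ w = p.2} := by
  have h : {p : W1 × W0 | ∃ w : V1s, (w : W1) = p.1 ∧ δ w = p.2} =
      ⋂ τ : V0, {p : W1 × W0 | ⟪p.2, (τ : W0)⟫ = ⟪p.1, d0 τ⟫} := by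
    ext ⟨w, a⟩
    simp only [Set.mem_ofPred_eq, Set.mem_iInter]
    constructor
    · rintro ⟨w', rfl, rfl⟩ τ
      exact hδ w' τ
    · intro H
      have hw : w ∈ V1s := (hV1s w).2 ⟨‖a‖, fun τ => by
        rw [← H τ]
        exact abs_real_inner_le_norm _ _⟩
      refine ⟨⟨w, hw⟩, rfl, hV0dense.eq_of_inner_left ℝ fun τ hτ => ?_⟩
      exact (hδ ⟨w, hw⟩ ⟨τ, hτ⟩).trans (H ⟨τ, hτ⟩).symm
  rw [h]
  exact isClosed_iInter fun τ => isClosed_eq (by fun_prop) (by fun_prop)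

/-- The abstract Poincaré inequality: the energy `‖d0† u‖² + ‖d1 u‖² + ‖P_H u‖²` controls `‖u‖²`. -/
lemma poincare_inequality
    (V0 : Submodule ℝ W0) (V1 : Submodule ℝ W1)
    (d0 : V0 →ₗ[ℝ] W1) (d1 : V1 →ₗ[ℝ] W2)
    (hgraph0 : IsClosed {p : W0 × W1 | ∃ τ : V0, (τ : W0) = p.1 ∧ d0 τ = p.2})
    (hgraph1 : IsClosed {p : W1 × W2 | ∃ v : V1, (v : W1) = p.1 ∧ d1 v = p.2})
    (hsub : ∀ τ : V0, d0 τ ∈ V1)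
    (hdd : ∀ τ : V0, d1 ⟨d0 τ, hsub τ⟩ = 0)
    (hBclosed : IsClosed (Set.range (⇑d0)))
    (hd1closed : IsClosed (Set.range (⇑d1)))
    (V1s : Submodule ℝ W1) (δ : V1s →ₗ[ℝ] W0)
    (hδ : ∀ (w : V1s) (τ : V0), ⟪δ w, (τ : W0)⟫ = ⟪(w : W1), d0 τ⟫)
    (PH : W1 → W1)
    (hPHorth : ∀ (w : W1) (q : V1), d1 q = 0 → (∀ τ : V0, ⟪(q : W1), d0 τ⟫ = 0) →
      ⟪w - PH w, (q : W1)⟫ = 0) :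
    ∃ K > 0, ∀ (u : W1) (hu1 : u ∈ V1) (hu2 : u ∈ V1s),
      ‖u‖ ^ 2 ≤ K ^ 2 * (‖δ ⟨u, hu2⟩‖ ^ 2 + ‖d1 ⟨u, hu1⟩‖ ^ 2 + ‖PH u‖ ^ 2) := by
  obtain ⟨C0, hC0, h0⟩ := exists_bounded_preimage V0 d0 hgraph0 hBclosed
  obtain ⟨C1, hC1, h1⟩ := exists_bounded_preimage V1 d1 hgraph1 hd1closed
  have hR : IsClosed ((LinearMap.range d0 : Submodule ℝ W1) : Set W1) := by
    rwa [LinearMap.coe_range]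
  have : CompleteSpace (LinearMap.range d0) := hR.completeSpace_coe
  refine ⟨(C1 + C0 + 1) + (C0 + 1) * C1 + 1, by positivity, fun u hu1 hu2 => ?_⟩
  obtain ⟨z, hz, hzn⟩ := h1 ⟨u, hu1⟩
  set B := LinearMap.range d0
  set k : W1 := u - z
  obtain ⟨τ', hτ'⟩ : B.starProjection k ∈ B := B.starProjection_apply_mem k
  obtain ⟨τ, hτ, hτn⟩ := h0 τ'
  rw [← hτ] at hτ' hτn
  -- the harmonic part of `u - z`
  set h : W1 := k - d0 τ
  have hV : h ∈ V1 := V1.sub_mem (V1.sub_mem hu1 z.2) (hsub τ)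
  have hd : d1 ⟨h, hV⟩ = 0 := by
    have : (⟨h, hV⟩ : V1) = ⟨u, hu1⟩ - z - ⟨d0 τ, hsub τ⟩ := rfl
    rw [this, map_sub, map_sub, hz, hdd, sub_self, sub_zero]
  have ho : ∀ σ : V0, ⟪h, d0 σ⟫ = 0 := fun σ => by
    have := B.starProjection_inner_eq_zero k (d0 σ) ⟨σ, rfl⟩
    rwa [← hτ'] at this
  have hP : ⟪u, h⟫ = ⟪PH u, h⟫ := by
    have := hPHorth u ⟨h, hV⟩ hd ho
    rw [inner_sub_left] at this
    linarith
  have hbn : ‖d0 τ‖ ≤ ‖k‖ := by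
    rw [hτ']
    exact B.norm_starProjection_apply_le k
  have hhn : ‖h‖ ≤ ‖k‖ := by
    have e : ‖k‖ ^ 2 = ‖h‖ ^ 2 + ‖d0 τ‖ ^ 2 := by
      have : k = h + d0 τ := by simp [h]
      rw [this, norm_add_sq_real, ho τ]
      ring
    exact le_of_sq_le_sq (by nlinarith [sq_nonneg ‖d0 τ‖]) (norm_nonneg _)
  have hkn : ‖k‖ ≤ ‖u‖ + C1 * ‖d1 ⟨u, hu1⟩‖ :=
    (norm_sub_le _ _).trans (by linarith)
  have key : ‖u‖ ^ 2 = ⟪u, (z : W1)⟫ + ⟪δ ⟨u, hu2⟩, (τ : W0)⟫ + ⟪PH u, h⟫ := by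
    rw [hδ, ← hP, ← inner_add_right, ← inner_add_right, ← real_inner_self_eq_norm_sq]
    congr 1
    simp [h, k]
  have e1 := real_inner_le_norm u (z : W1)
  have e2 := real_inner_le_norm (δ ⟨u, hu2⟩) (τ : W0)
  have e3 := real_inner_le_norm (PH u) h
  set D := ‖d1 ⟨u, hu1⟩‖
  set A := ‖δ ⟨u, hu2⟩‖
  set P := ‖PH u‖
  have hD0 : 0 ≤ D := norm_nonneg _
  have hA0 : 0 ≤ A := norm_nonneg _
  have hP0 : 0 ≤ P := norm_nonneg _
  have hx0 : 0 ≤ ‖u‖ := norm_nonneg _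
  set x := ‖u‖
  set S := Real.sqrt (A ^ 2 + D ^ 2 + P ^ 2)
  have hS0 : 0 ≤ S := Real.sqrt_nonneg _
  have hS2 : S ^ 2 = A ^ 2 + D ^ 2 + P ^ 2 := Real.sq_sqrt (by positivity)
  have hAS : A ≤ S := Real.le_sqrt_of_sq_le (by nlinarith)
  have hDS : D ≤ S := Real.le_sqrt_of_sq_le (by nlinarith)
  have hPS : P ≤ S := Real.le_sqrt_of_sq_le (by nlinarith)
  have hk' : ‖k‖ ≤ x + C1 * S := hkn.trans (by gcongr)
  have f1 : x * ‖(z : W1)‖ ≤ x * (C1 * S) := by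
    gcongr
    exact hzn.trans (by gcongr)
  have f2 : A * ‖(τ : W0)‖ ≤ S * (C0 * (x + C1 * S)) := by
    gcongr
    exact hτn.trans (by gcongr; exact hbn.trans hk')
  have f3 : P * ‖h‖ ≤ S * (x + C1 * S) := by
    gcongr
    exact hhn.trans hk'
  rw [← hS2, ← mul_pow]
  have quad : x ^ 2 ≤ (C1 + C0 + 1) * S * x + (C0 + 1) * C1 * S ^ 2 := by
    linarith
  -- a quadratic inequality `x² ≤ a S x + b S²` forces `x ≤ (a + b + 1) S`
  refine pow_le_pow_left₀ hx0 ?_ 2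
  by_contra! hlt
  have hb : 0 ≤ (C0 + 1) * C1 := by positivity
  have ha : 0 ≤ C1 + C0 + 1 := by positivity
  generalize (C0 + 1) * C1 = b at *
  generalize C1 + C0 + 1 = a at *
  have hSx : S ≤ x := by nlinarith [mul_nonneg ha hS0, mul_nonneg hb hS0]
  have hxpos : 0 < x := lt_of_le_of_lt (by positivity) hlt
  have g1 : b * S ^ 2 ≤ b * S * x := by
    rw [pow_two, ← mul_assoc]
    gcongr
  nlinarith [mul_lt_mul_of_pos_right hlt hxpos, mul_nonneg hS0 hx0]

/-- The space `X = V1 ∩ V1*`, realised as the graph `{(u, d0† u, d1 u)}` inside the Hilbert product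
`W1 × W0 × W2`, which induces on it the inner product `⟪·, ·⟫_X`. -/
def graphX (V1 : Submodule ℝ W1) (V1s : Submodule ℝ W1)
    (d1 : V1 →ₗ[ℝ] W2) (δ : V1s →ₗ[ℝ] W0) :
    Submodule ℝ (WithLp 2 (W1 × WithLp 2 (W0 × W2))) where
  carrier := {p | (∃ w : V1s, (w : W1) = p.fst ∧ δ w = p.snd.fst) ∧
    ∃ v : V1, (v : W1) = p.fst ∧ d1 v = p.snd.snd}
  zero_mem' := ⟨⟨0, by simp⟩, ⟨0, by simp⟩⟩
  add_mem' := by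
    rintro p q ⟨⟨w, hw, hw'⟩, v, hv, hv'⟩ ⟨⟨w₂, hw₂, hw₂'⟩, v₂, hv₂, hv₂'⟩
    exact ⟨⟨w + w₂, by simp [hw, hw₂], by simp [hw', hw₂']⟩,
      ⟨v + v₂, by simp [hv, hv₂], by simp [hv', hv₂']⟩⟩
  smul_mem' := by
    rintro c p ⟨⟨w, hw, hw'⟩, v, hv, hv'⟩
    exact ⟨⟨c • w, by simp [hw], by simp [hw']⟩, ⟨c • v, by simp [hv], by simp [hv']⟩⟩

omit [CompleteSpace W0] [CompleteSpace W1] [CompleteSpace W2] in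
lemma exists_mem_of_mem_graphX {V1 : Submodule ℝ W1} {V1s : Submodule ℝ W1}
    {d1 : V1 →ₗ[ℝ] W2} {δ : V1s →ₗ[ℝ] W0} {p : WithLp 2 (W1 × WithLp 2 (W0 × W2))}
    (hp : p ∈ graphX V1 V1s d1 δ) :
    ∃ (h1 : p.fst ∈ V1) (h2 : p.fst ∈ V1s),
      δ ⟨p.fst, h2⟩ = p.snd.fst ∧ d1 ⟨p.fst, h1⟩ = p.snd.snd := by
  obtain ⟨⟨⟨w, hw⟩, hwp, hw'⟩, ⟨v, hv⟩, hvp, hv'⟩ := hp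
  dsimp only at hwp hvp
  subst hwp hvp
  exact ⟨hv, hw, hw', hv'⟩

omit [CompleteSpace W0] [CompleteSpace W1] [CompleteSpace W2] in
lemma isClosed_graphX (V1 : Submodule ℝ W1) (V1s : Submodule ℝ W1)
    (d1 : V1 →ₗ[ℝ] W2) (δ : V1s →ₗ[ℝ] W0)
    (h1 : IsClosed {p : W1 × W2 | ∃ v : V1, (v : W1) = p.1 ∧ d1 v = p.2})
    (hs : IsClosed {p : W1 × W0 | ∃ w : V1s, (w : W1) = p.1 ∧ δ w = p.2}) :
    IsClosed (graphX V1 V1s d1 δ : Set (WithLp 2 (W1 × WithLp 2 (W0 × W2)))) := by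
  have c1 : Continuous fun p : WithLp 2 (W1 × WithLp 2 (W0 × W2)) => (p.fst, p.snd.fst) := by
    fun_prop
  have c2 : Continuous fun p : WithLp 2 (W1 × WithLp 2 (W0 × W2)) => (p.fst, p.snd.snd) := by
    fun_prop
  exact (hs.preimage c1).inter (h1.preimage c2)

lemma exists_forall_apply_eq_of_isCoercive {U : Type*}
    [NormedAddCommGroup U] [InnerProductSpace ℝ U] [CompleteSpace U]
    (a : U →L[ℝ] U →L[ℝ] ℝ) (ha : IsCoercive a) (l : U →L[ℝ] ℝ) :
    ∃ p, ∀ q, a p q = l q := by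
  obtain ⟨p, hp⟩ := ha.continuousLinearEquivOfBilin.surjective
    ((InnerProductSpace.toDual ℝ U).symm l)
  refine ⟨p, fun q => ?_⟩
  rw [← ha.continuousLinearEquivOfBilin_apply, hp, InnerProductSpace.toDual_symm_apply]

/-- Existence of solutions, by Lax-Milgram on `graphX`; `P` is the projection as a bounded operator
and `hK` is the Poincaré inequality. -/
lemma exists_variationalSolution (V1 : Submodule ℝ W1) (V1s : Submodule ℝ W1)
    (d1 : V1 →ₗ[ℝ] W2) (δ : V1s →ₗ[ℝ] W0)
    (h1 : IsClosed {p : W1 × W2 | ∃ v : V1, (v : W1) = p.1 ∧ d1 v = p.2})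
    (hs : IsClosed {p : W1 × W0 | ∃ w : V1s, (w : W1) = p.1 ∧ δ w = p.2})
    (P : W1 →L[ℝ] W1) (K : ℝ)
    (hK : ∀ (u : W1) (hu1 : u ∈ V1) (hu2 : u ∈ V1s),
      ‖u‖ ^ 2 ≤ K ^ 2 * (‖δ ⟨u, hu2⟩‖ ^ 2 + ‖d1 ⟨u, hu1⟩‖ ^ 2 + ‖P u‖ ^ 2)) (f : W1) :
    ∃ u, IsVariationalSolution V1 V1s d1 δ P f u := by
  let X := graphX V1 V1s d1 δ
  have : CompleteSpace X := (isClosed_graphX V1 V1s d1 δ h1 hs).completeSpace_coe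
  let π : X →L[ℝ] W1 := (WithLp.fstL 2 ℝ W1 (WithLp 2 (W0 × W2))).comp X.subtypeL
  let π' : X →L[ℝ] WithLp 2 (W0 × W2) :=
    (WithLp.sndL 2 ℝ W1 (WithLp 2 (W0 × W2))).comp X.subtypeL
  let a : X →L[ℝ] X →L[ℝ] ℝ :=
    (innerSL ℝ).bilinearComp π' π' + (innerSL ℝ).bilinearComp (P.comp π) (P.comp π)
  have ha : ∀ p q : X, a p q = ⟪p.1.snd.fst, q.1.snd.fst⟫ + ⟪p.1.snd.snd, q.1.snd.snd⟫ +
      ⟪P p.1.fst, P q.1.fst⟫ := fun p q => rfl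
  have hco : IsCoercive a := by
    refine ⟨(K ^ 2 + 1)⁻¹, by positivity, ?_⟩
    rintro ⟨p, hpX⟩
    obtain ⟨hv, hw, hw', hv'⟩ := exists_mem_of_mem_graphX hpX
    have := hK p.fst hv hw
    rw [mul_assoc, inv_mul_le_iff₀ (by positivity), ha, ← pow_two, Submodule.coe_norm,
      WithLp.prod_norm_sq_eq_of_L2, WithLp.prod_norm_sq_eq_of_L2 p.snd]
    simp only [real_inner_self_eq_norm_sq]
    rw [hw', hv'] at this
    nlinarith [sq_nonneg ‖P p.fst‖]
  let l : X →L[ℝ] ℝ := (innerSL ℝ f).comp π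
  obtain ⟨p, hp⟩ := exists_forall_apply_eq_of_isCoercive (U := X) a hco l
  have hsol : ∀ q : X, a p q = ⟪f, q.1.fst⟫ := hp
  obtain ⟨p, hpX⟩ := p
  obtain ⟨hv, hw, hw', hv'⟩ := exists_mem_of_mem_graphX hpX
  refine ⟨p.fst, hv, hw, fun v hv1 hv2 => ?_⟩
  have := hsol ⟨WithLp.toLp 2 (v, WithLp.toLp 2 (δ ⟨v, hv2⟩, d1 ⟨v, hv1⟩)),
    ⟨⟨v, hv2⟩, rfl, rfl⟩, ⟨v, hv1⟩, rfl, rfl⟩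
  rw [ha] at this
  rw [hw', hv']
  exact this

omit [CompleteSpace W0] [CompleteSpace W1] [CompleteSpace W2] in
/-- A map with the defining properties of the orthogonal projection onto `H` is a bounded linear
operator. -/
lemma exists_clm_eq_harmonicProjection (V0 : Submodule ℝ W0) (V1 : Submodule ℝ W1)
    (d0 : V0 →ₗ[ℝ] W1) (d1 : V1 →ₗ[ℝ] W2) (PH : W1 → W1)
    (hPHmem : ∀ w : W1, ∃ hm : PH w ∈ V1,
      d1 ⟨PH w, hm⟩ = 0 ∧ ∀ τ : V0, ⟪PH w, d0 τ⟫ = 0)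
    (hPHorth : ∀ (w : W1) (q : V1), d1 q = 0 → (∀ τ : V0, ⟪(q : W1), d0 τ⟫ = 0) →
      ⟪w - PH w, (q : W1)⟫ = 0) :
    ∃ P : W1 →L[ℝ] W1, PH = P := by
  let H : Submodule ℝ W1 := (LinearMap.ker d1).map V1.subtype ⊓ (LinearMap.range d0)ᗮ
  have hmem : ∀ w, PH w ∈ H := fun w => by
    obtain ⟨hm, hd, ho⟩ := hPHmem w
    refine ⟨⟨⟨PH w, hm⟩, hd, rfl⟩, (Submodule.mem_orthogonal' _ _).2 ?_⟩
    rintro _ ⟨τ, rfl⟩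
    exact ho τ
  have horth : ∀ w, ∀ q ∈ H, ⟪w - PH w, q⟫ = 0 := by
    rintro w _ ⟨⟨q, hq, rfl⟩, hq'⟩
    exact hPHorth w q hq fun τ => (Submodule.mem_orthogonal' _ _).1 hq' _ ⟨τ, rfl⟩
  -- `H` is not known to be closed here; the given projection itself witnesses `H ⊕ Hᗮ = W1`
  have : H.HasOrthogonalProjection :=
    ⟨fun w => ⟨PH w, hmem w, (Submodule.mem_orthogonal' _ _).2 (horth w)⟩⟩
  exact ⟨H.starProjection, funext fun w =>
    (Submodule.eq_starProjection_of_mem_of_inner_eq_zero (hmem w) (horth w)).symm⟩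

/-- **Well-posedness of the (unmixed) variational formulation of the abstract Hodge
Laplacian, with the harmonic projection added.**  For a closed Hilbert complex segment
`d0 : V0 ⊆ W0 → W1`, `d1 : V1 ⊆ W1 → W2`, with `d0†` the adjoint of `d0` (with domain
`V1*`) and `P_H` the orthogonal projection onto the harmonic space
`H = {w ∈ V1 : d1 w = 0, w ⟂ d0(V0)}`: for every `f ∈ W1` there is a unique
`u ∈ X = V1 ∩ V1*` with
`⟪d0† u, d0† v⟫ + ⟪d1 u, d1 v⟫ + ⟪P_H u, P_H v⟫ = ⟪f, v⟫` for all `v ∈ X`,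
and `‖u‖_X ≤ C ‖f‖` with `C` independent of `f`. -/
theorem hodge_laplacian_variational_wellposed
    (V0 : Submodule ℝ W0) (V1 : Submodule ℝ W1)
    (d0 : V0 →ₗ[ℝ] W1) (d1 : V1 →ₗ[ℝ] W2)
    (hV0dense : Dense (V0 : Set W0)) (hV1dense : Dense (V1 : Set W1))
    (hgraph0 : IsClosed {p : W0 × W1 | ∃ τ : V0, (τ : W0) = p.1 ∧ d0 τ = p.2})
    (hgraph1 : IsClosed {p : W1 × W2 | ∃ v : V1, (v : W1) = p.1 ∧ d1 v = p.2})
    (hsub : ∀ τ : V0, d0 τ ∈ V1)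
    (hdd : ∀ τ : V0, d1 ⟨d0 τ, hsub τ⟩ = 0)
    (hBclosed : IsClosed (Set.range (⇑d0)))
    (hd1closed : IsClosed (Set.range (⇑d1)))
    -- the adjoint `d0†`, with its domain `V1* ⊆ W1`
    (V1s : Submodule ℝ W1)
    (hV1s : ∀ w : W1, w ∈ V1s ↔ ∃ Cw : ℝ, ∀ τ : V0, |⟪w, d0 τ⟫| ≤ Cw * ‖(τ : W0)‖)
    (δ : V1s →ₗ[ℝ] W0)
    (hδ : ∀ (w : V1s) (τ : V0), ⟪δ w, (τ : W0)⟫ = ⟪(w : W1), d0 τ⟫)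
    -- the `W1`-orthogonal projection onto the harmonic space `H`
    (PH : W1 → W1)
    (hPHmem : ∀ w : W1, ∃ hm : PH w ∈ V1,
      d1 ⟨PH w, hm⟩ = 0 ∧ ∀ τ : V0, ⟪PH w, d0 τ⟫ = 0)
    (hPHfix : ∀ (q : V1), d1 q = 0 → (∀ τ : V0, ⟪(q : W1), d0 τ⟫ = 0) →
      PH (q : W1) = (q : W1))
    (hPHorth : ∀ (w : W1) (q : V1), d1 q = 0 → (∀ τ : V0, ⟪(q : W1), d0 τ⟫ = 0) →
      ⟪w - PH w, (q : W1)⟫ = 0) :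
    ∃ C : ℝ, 0 < C ∧ ∀ f : W1,
      (∃! u : W1, IsVariationalSolution V1 V1s d1 δ PH f u) ∧
      ∀ (u : W1) (hu1 : u ∈ V1) (hu2 : u ∈ V1s),
        IsVariationalSolution V1 V1s d1 δ PH f u →
        Real.sqrt (‖u‖ ^ 2 + ‖d1 ⟨u, hu1⟩‖ ^ 2 + ‖δ ⟨u, hu2⟩‖ ^ 2) ≤ C * ‖f‖ := by
  obtain ⟨K, hK0, hK⟩ := poincare_inequality V0 V1 d0 d1 hgraph0 hgraph1 hsub hdd hBclosed hd1closed
    V1s δ hδ PH hPHorth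
  obtain ⟨P, rfl⟩ := exists_clm_eq_harmonicProjection V0 V1 d0 d1 PH hPHmem hPHorth
  refine ⟨K ^ 2 + K, by positivity, fun f => ⟨?_, ?_⟩⟩
  · obtain ⟨u, hu⟩ := exists_variationalSolution V1 V1s d1 δ hgraph1
      (isClosed_graph_adjoint V0 d0 hV0dense V1s hV1s δ hδ) P K hK f
    refine ⟨u, hu, fun u' hu' => ?_⟩
    obtain ⟨hu1, hu2, hu⟩ := hu
    obtain ⟨hu1', hu2', hu'⟩ := hu'
    have m1 := V1.sub_mem hu1' hu1
    have m2 := V1s.sub_mem hu2' hu2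
    -- the difference of two solutions has zero energy
    have e := hu (u' - u) m1 m2
    have e' := hu' (u' - u) m1 m2
    have s1 : d1 ⟨u' - u, m1⟩ = d1 ⟨u', hu1'⟩ - d1 ⟨u, hu1⟩ := map_sub d1 ⟨u', hu1'⟩ ⟨u, hu1⟩
    have s2 : δ ⟨u' - u, m2⟩ = δ ⟨u', hu2'⟩ - δ ⟨u, hu2⟩ := map_sub δ ⟨u', hu2'⟩ ⟨u, hu2⟩
    have s3 : P (u' - u) = P u' - P u := map_sub P u' u
    have E : ‖δ ⟨u' - u, m2⟩‖ ^ 2 + ‖d1 ⟨u' - u, m1⟩‖ ^ 2 + ‖P (u' - u)‖ ^ 2 = 0 := by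
      simp only [← real_inner_self_eq_norm_sq]
      nth_rewrite 1 [s1, s2, s3]
      simp only [inner_sub_left]
      linarith
    have := hK (u' - u) m1 m2
    rw [E, mul_zero] at this
    rw [← sub_eq_zero, ← norm_eq_zero]
    exact pow_eq_zero_iff two_ne_zero |>.1 (le_antisymm this (sq_nonneg _))
  · rintro u hu1 hu2 ⟨_, _, hu⟩
    have e := hu u hu1 hu2
    have hp := hK u hu1 hu2
    simp only [real_inner_self_eq_norm_sq] at e
    have hfu := real_inner_le_norm f u
    rw [e] at hp
    -- `‖u‖² ≤ K² ⟪f, u⟫ ≤ K² ‖f‖ ‖u‖`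
    have hu' : ‖u‖ ≤ K ^ 2 * ‖f‖ := by
      rcases (norm_nonneg u).eq_or_lt with h | h
      · rw [← h]
        positivity
      · refine le_of_mul_le_mul_right ?_ h
        nlinarith [mul_le_mul_of_nonneg_left hfu (sq_nonneg K)]
    have hE : ⟪f, u⟫ ≤ K ^ 2 * ‖f‖ ^ 2 := by
      nlinarith [mul_le_mul_of_nonneg_left hu' (norm_nonneg f)]
    refine Real.sqrt_le_iff.2 ⟨by positivity, ?_⟩
    have h2 : ‖u‖ ^ 2 ≤ (K ^ 2 * ‖f‖) ^ 2 := pow_le_pow_left₀ (norm_nonneg u) hu' 2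
    have h3 : 0 ≤ K ^ 3 * ‖f‖ ^ 2 := by positivity
    nlinarith [sq_nonneg ‖P u‖]

end
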